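/- In the online setting where each attacker best-responds to the played detection function, for any detection function π : V → [0,1] and its induced utility profile G^π with Gᵢ^π = max_v{Uᵢᵘ(v) − π(v)(Uᵢᵘ(v)+Uᵢᵈ(v))}, the per-round surrogate loss satisfies: (a) for any round against a non-attacker with vector v, π(v)·c_fa(v) ≥ π_{G^π}(v)·c_fa(v); and (b) for any round against a best-responding type-i attacker, the expected loss equals Gᵢ^π. Consequently, min over π of the total expected loss equals min over G of the surrogate Σ_t c_t(G), where c_t(G) = Gᵢ on attacker rounds of type i and c_t(G) = π_G(v_t)c_fa(v_t) on non-attacker rounds with vector v_t. -/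

import Mathlib

open Finset

/-- The optimal probability of detection associated with utility profile `G`. -/
noncomputable def piG {V : Type*} [Fintype V] {m : ℕ} (Uu Ud : Fin m → V → ℝ)
    (G : Fin m → ℝ) (v : V) : ℝ :=
  max 0 (⨆ i, (Uu i v - G i) / (Uu i v + Ud i v))

/-- The minimum possible attacker gain `G̲ᵢ = max_v (−Uᵢᵈ(v))`. -/
noncomputable def Glo {V : Type*} [Fintype V] {m : ℕ} (Ud : Fin m → V → ℝ)
    (i : Fin m) : ℝ :=
  ⨆ v, -(Ud i v)

/-- The maximum possible attacker gain `Ḡᵢ = max_v Uᵢᵘ(v)`. -/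
noncomputable def Ghi {V : Type*} [Fintype V] {m : ℕ} (Uu : Fin m → V → ℝ)
    (i : Fin m) : ℝ :=
  ⨆ v, Uu i v

/-- The best-response utility profile `G^π` induced by a detection function `π`. -/
noncomputable def Gpi {V : Type*} [Fintype V] {m : ℕ} (Uu Ud : Fin m → V → ℝ)
    (π : V → ℝ) (i : Fin m) : ℝ :=
  ⨆ v, (Uu i v - π v * (Uu i v + Ud i v))

/-- Expected per-round loss of detection function `π` on a round: against a
best-responding type-`i` attacker (`Sum.inl i`) or a non-attacker vector (`Sum.inr v`). -/
noncomputable def roundLoss {V : Type*} [Fintype V] {m : ℕ} (Uu Ud : Fin m → V → ℝ)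
    (cfa : V → ℝ) (π : V → ℝ) : Sum (Fin m) V → ℝ
  | Sum.inl i => ⨆ v, (Uu i v * (1 - π v) - Ud i v * π v)
  | Sum.inr v => π v * cfa v

/-- Surrogate per-round loss `c_t(G)` used by the efficient online algorithm. -/
noncomputable def surrogateLoss {V : Type*} [Fintype V] {m : ℕ} (Uu Ud : Fin m → V → ℝ)
    (cfa : V → ℝ) (G : Fin m → ℝ) : Sum (Fin m) V → ℝ
  | Sum.inl i => G i
  | Sum.inr v => piG Uu Ud G v * cfa v

/-!
For `0 ≤ π`, the inequalities `π_G ≤ π` and `G^π ≤ G` both unfold to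
`Uᵢᵘ(v) - π(v) (Uᵢᵘ(v) + Uᵢᵈ(v)) ≤ Gᵢ` for all `i` and `v`. So `G ↦ π_G` and `π ↦ G^π` form an
antitone Galois connection, and its two (co)unit inequalities `π_{G^π} ≤ π` and `G^{π_G} ≤ G`
compare the two losses round by round, in both directions.
-/

section

variable {V : Type*} [Fintype V] {m : ℕ} {Uu Ud : Fin m → V → ℝ} {cfa π : V → ℝ} {G : Fin m → ℝ}

theorem piG_nonneg : 0 ≤ piG Uu Ud G :=
  fun _ => le_max_left _ _

theorem piG_apply_le_iff {v : V} {p : ℝ} (hs : ∀ i, 0 < Uu i v + Ud i v) (hp : 0 ≤ p) :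
    piG Uu Ud G v ≤ p ↔ ∀ i, Uu i v - p * (Uu i v + Ud i v) ≤ G i := by
  have iSup_le_iff_forall : ⨆ i, (Uu i v - G i) / (Uu i v + Ud i v) ≤ p ↔
      ∀ i, (Uu i v - G i) / (Uu i v + Ud i v) ≤ p :=
    ⟨fun h i => (le_ciSup (Set.finite_range _).bddAbove i).trans h, fun h => Real.iSup_le h hp⟩
  simp only [piG, max_le_iff, hp, true_and, iSup_le_iff_forall, div_le_iff₀ (hs _),
    sub_le_comm]

theorem Gpi_apply_le_iff [Nonempty V] {i : Fin m} {g : ℝ} :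
    Gpi Uu Ud π i ≤ g ↔ ∀ v, Uu i v - π v * (Uu i v + Ud i v) ≤ g :=
  ciSup_le_iff (Set.finite_range _).bddAbove

theorem piG_le_iff_Gpi_le [Nonempty V] (hs : ∀ i v, 0 < Uu i v + Ud i v) (hπ : 0 ≤ π) :
    piG Uu Ud G ≤ π ↔ Gpi Uu Ud π ≤ G := by
  simp only [Pi.le_def, piG_apply_le_iff (hs · _) (hπ _), Gpi_apply_le_iff]
  exact forall_comm

theorem piG_Gpi_le [Nonempty V] (hs : ∀ i v, 0 < Uu i v + Ud i v) (hπ : 0 ≤ π) :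
    piG Uu Ud (Gpi Uu Ud π) ≤ π :=
  (piG_le_iff_Gpi_le hs hπ).2 le_rfl

theorem Gpi_piG_le [Nonempty V] (hs : ∀ i v, 0 < Uu i v + Ud i v) :
    Gpi Uu Ud (piG Uu Ud G) ≤ G :=
  (piG_le_iff_Gpi_le hs piG_nonneg).1 le_rfl

theorem Glo_le_Gpi {i : Fin m} (hs : ∀ v, 0 ≤ Uu i v + Ud i v) (hπ : π ≤ 1) :
    Glo Ud i ≤ Gpi Uu Ud π i :=
  ciSup_mono (Set.finite_range _).bddAbove fun v => by
    linarith [mul_le_of_le_one_left (hs v) (hπ v)]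

theorem Gpi_le_Ghi {i : Fin m} (hs : ∀ v, 0 ≤ Uu i v + Ud i v) (hπ : 0 ≤ π) :
    Gpi Uu Ud π i ≤ Ghi Uu i :=
  ciSup_mono (Set.finite_range _).bddAbove fun v => sub_le_self _ (mul_nonneg (hπ v) (hs v))

theorem piG_le_one (hs : ∀ i v, 0 < Uu i v + Ud i v) (hG : Glo Ud ≤ G) : piG Uu Ud G ≤ 1 := by
  refine fun v => (piG_apply_le_iff (hs · v) zero_le_one).2 fun i => ?_
  calc Uu i v - 1 * (Uu i v + Ud i v) = -Ud i v := by ring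
    _ ≤ Glo Ud i := le_ciSup (f := fun v => -Ud i v) (Set.finite_range _).bddAbove v
    _ ≤ G i := hG i

theorem roundLoss_inl (i : Fin m) : roundLoss Uu Ud cfa π (Sum.inl i) = Gpi Uu Ud π i :=
  iSup_congr fun v => by ring

theorem surrogateLoss_Gpi_le_roundLoss [Nonempty V] (hs : ∀ i v, 0 < Uu i v + Ud i v)
    (hcfa : 0 ≤ cfa) (hπ : 0 ≤ π) :
    surrogateLoss Uu Ud cfa (Gpi Uu Ud π) ≤ roundLoss Uu Ud cfa π
  | Sum.inl i => (roundLoss_inl i).ge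
  | Sum.inr v => mul_le_mul_of_nonneg_right (piG_Gpi_le hs hπ v) (hcfa v)

theorem roundLoss_piG_le_surrogateLoss [Nonempty V] (hs : ∀ i v, 0 < Uu i v + Ud i v) :
    roundLoss Uu Ud cfa (piG Uu Ud G) ≤ surrogateLoss Uu Ud cfa G
  | Sum.inl i => (roundLoss_inl i).trans_le (Gpi_piG_le hs i)
  | Sum.inr _ => le_rfl

end

/-- (a) on non-attacker rounds `π_{G^π}` has no larger false-alarm loss
than `π`; (b) against a best-responding type-`i` attacker the expected loss of `π` is
exactly `Gᵢ^π`; consequently the minimum over `π` of the total expected loss equals the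
minimum over `G` in the box of the total surrogate loss. -/
theorem surrogate_loss_equivalence {V : Type*} [Fintype V] [Nonempty V] {m T : ℕ}
    (Uu Ud : Fin m → V → ℝ) (hs : ∀ i v, 0 < Uu i v + Ud i v)
    (cfa : V → ℝ) (hcfa : ∀ v, 0 ≤ cfa v)
    (outcome : Fin T → Sum (Fin m) V) :
    -- (a)
    (∀ π : V → ℝ, (∀ v, π v ∈ Set.Icc (0 : ℝ) 1) → ∀ v : V,
        piG Uu Ud (Gpi Uu Ud π) v * cfa v ≤ π v * cfa v)
    -- (b)
    ∧ (∀ π : V → ℝ, ∀ i : Fin m, roundLoss Uu Ud cfa π (Sum.inl i) = Gpi Uu Ud π i)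
    -- consequence: equality of the two minima
    ∧ (∀ π : V → ℝ, (∀ v, π v ∈ Set.Icc (0 : ℝ) 1) →
        ∃ G : Fin m → ℝ, (∀ i, G i ∈ Set.Icc (Glo Ud i) (Ghi Uu i)) ∧
          ∑ t, surrogateLoss Uu Ud cfa G (outcome t)
            ≤ ∑ t, roundLoss Uu Ud cfa π (outcome t))
    ∧ (∀ G : Fin m → ℝ, (∀ i, G i ∈ Set.Icc (Glo Ud i) (Ghi Uu i)) →
        ∃ π : V → ℝ, (∀ v, π v ∈ Set.Icc (0 : ℝ) 1) ∧
          ∑ t, roundLoss Uu Ud cfa π (outcome t)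
            ≤ ∑ t, surrogateLoss Uu Ud cfa G (outcome t)) := by
  refine ⟨fun π hπ v => ?_, fun _ => roundLoss_inl, fun π hπ => ?_, fun G hG => ?_⟩
  · exact mul_le_mul_of_nonneg_right (piG_Gpi_le hs (fun v => (hπ v).1) v) (hcfa v)
  · have hπ₀ : 0 ≤ π := fun v => (hπ v).1
    have hπ₁ : π ≤ 1 := fun v => (hπ v).2
    refine ⟨Gpi Uu Ud π, fun i => ?_, sum_le_sum fun t _ => ?_⟩
    · have hsi : ∀ v, 0 ≤ Uu i v + Ud i v := fun v => (hs i v).le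
      exact ⟨Glo_le_Gpi hsi hπ₁, Gpi_le_Ghi hsi hπ₀⟩
    · exact surrogateLoss_Gpi_le_roundLoss hs hcfa hπ₀ (outcome t)
  · refine ⟨piG Uu Ud G, fun v => ⟨piG_nonneg v, ?_⟩, sum_le_sum fun t _ => ?_⟩
    · exact piG_le_one hs (fun i => (hG i).1) v
    · exact roundLoss_piG_le_surrogateLoss hs (outcome t)
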